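/- Let L be an extreme point of the convex set L_{m,n} of quantum channels from m×m to n×n complex matrices. Then rank Z(L) ≤ m. -/

import Mathlib

open Matrix
open scoped ComplexOrder

/-- The Choi matrix of a linear map `L` from `m × m` to `n × n` complex matrices:
its `((i,p),(j,q))` entry is the `(p,q)` entry of `L(E_{ij})`. -/
def choi (m n : ℕ) (L : Matrix (Fin m) (Fin m) ℂ →ₗ[ℂ] Matrix (Fin n) (Fin n) ℂ) :
    Matrix (Fin m × Fin n) (Fin m × Fin n) ℂ :=
  Matrix.of fun ip jq => L (Matrix.single ip.1 jq.1 (1 : ℂ)) ip.2 jq.2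

/-- `L` is a quantum channel: it admits a Kraus representation
`L(X) = ∑ Aᵢ X Aᵢ*` with `∑ Aᵢ* Aᵢ = I`. -/
def IsChannel (m n : ℕ) (L : Matrix (Fin m) (Fin m) ℂ →ₗ[ℂ] Matrix (Fin n) (Fin n) ℂ) : Prop :=
  ∃ (k : ℕ) (A : Fin k → Matrix (Fin n) (Fin m) ℂ),
    (∀ X, L X = ∑ i, A i * X * (A i)ᴴ) ∧ ∑ i, (A i)ᴴ * A i = 1

/-- `L` is an extreme point of the convex set of quantum channels. -/
def IsExtremeChannel (m n : ℕ)
    (L : Matrix (Fin m) (Fin m) ℂ →ₗ[ℂ] Matrix (Fin n) (Fin n) ℂ) : Prop :=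
  IsChannel m n L ∧
    ∀ L₁ L₂ : Matrix (Fin m) (Fin m) ℂ →ₗ[ℂ] Matrix (Fin n) (Fin n) ℂ,
      IsChannel m n L₁ → IsChannel m n L₂ → ∀ t : ℝ, 0 < t → t < 1 →
      L = (t : ℂ) • L₁ + ((1 - t : ℝ) : ℂ) • L₂ → L₁ = L ∧ L₂ = L

/-! The Choi correspondence `L ↦ choi m n L` turns the channels into the spectrahedron of positive
semidefinite matrices with partial trace `1`, so the bound is a dimension count for the extreme
points of a spectrahedron. Factor such a point of rank `r` as `Z = V * Vᴴ` with `V` of full column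
rank `r`. If `r ^ 2` exceeds the number `m ^ 2` of scalar constraints, then the constraints
annihilate `V * H * Vᴴ` for some nonzero Hermitian `r × r` matrix `H`, and for small `ε` the point
`Z` is the midpoint of the feasible matrices `V * (1 ± ε • H) * Vᴴ`, which are distinct because `V`
has a left inverse. -/

section StarStructure

open ComplexStarModule

theorem exists_isSelfAdjoint_mem_ne_zero {A : Type*} [AddCommGroup A] [Module ℂ A]
    [StarAddMonoid A] [StarModule ℂ A] {p : Submodule ℂ A} (hstar : ∀ x ∈ p, star x ∈ p)
    (hp : p ≠ ⊥) : ∃ x ∈ p, IsSelfAdjoint x ∧ x ≠ 0 := by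
  obtain ⟨x, hx, hx0⟩ := Submodule.exists_mem_ne_zero_of_ne_bot hp
  have hre : (ℜ x : A) ∈ p := by
    rw [realPart_apply_coe]
    exact p.smul_of_tower_mem _ (p.add_mem hx (hstar x hx))
  have him : (ℑ x : A) ∈ p := by
    rw [imaginaryPart_apply_coe]
    exact p.smul_mem _ (p.smul_of_tower_mem _ (p.sub_mem hx (hstar x hx)))
  by_cases h : (ℜ x : A) = 0
  · refine ⟨ℑ x, him, (ℑ x).2, fun h' => hx0 ?_⟩
    rw [← realPart_add_I_smul_imaginaryPart x, h, h', smul_zero, add_zero]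
  · exact ⟨ℜ x, hre, (ℜ x).2, h⟩

theorem exists_pos_nonneg_one_add_sub_smul {A : Type*} [CStarAlgebra A]
    [PartialOrder A] [StarOrderedRing A] {a : A} (ha : IsSelfAdjoint a) :
    ∃ ε : ℝ, 0 < ε ∧ 0 ≤ 1 + ε • a ∧ 0 ≤ 1 - ε • a := by
  set c := ‖a‖ + 1
  have hc : 0 < c := by positivity
  have hle : algebraMap ℝ A ‖a‖ ≤ algebraMap ℝ A c :=
    algebraMap_mono A (by simp [c])
  have hone : c⁻¹ • algebraMap ℝ A c = 1 := by
    rw [Algebra.algebraMap_eq_smul_one, inv_smul_smul₀ hc.ne']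
  refine ⟨c⁻¹, inv_pos.mpr hc, ?_, ?_⟩
  · rw [← hone, ← smul_add]
    exact smul_nonneg (inv_nonneg.mpr hc.le) (neg_le_iff_add_nonneg'.mp
      ((neg_le_neg hle).trans ha.neg_algebraMap_norm_le_self))
  · rw [← hone, ← smul_sub]
    exact smul_nonneg (inv_nonneg.mpr hc.le) (sub_nonneg.mpr (ha.le_algebraMap_norm_self.trans hle))

end StarStructure

section RankFactorization

theorem exists_left_inverse_of_rank_eq_card {K m n : Type*} [Field K] [Fintype m] [Fintype n]
    [DecidableEq n] {V : Matrix m n K} (hV : V.rank = Fintype.card n) :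
    ∃ W : Matrix n m K, W * V = 1 := by
  rw [← vecMul_surjective_iff_exists_left_inverse]
  have hrange : LinearMap.range V.vecMulLinear = ⊤ := by
    apply Submodule.eq_top_of_finrank_eq
    rw [Module.finrank_fintype_fun_eq_card, ← hV, ← rank_transpose, Matrix.rank,
      mulVecLin_transpose]
  exact LinearMap.range_eq_top.mp hrange

theorem exists_eq_mul_conjTranspose_of_posSemidef {𝕜 N : Type*} [RCLike 𝕜] [Fintype N]
    {Z : Matrix N N 𝕜} (hZ : Z.PosSemidef) :
    ∃ V : Matrix N (Fin Z.rank) 𝕜, Z = V * Vᴴ := by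
  classical
  let ev := hZ.1.eigenvalues
  let U : Matrix N N 𝕜 := hZ.1.eigenvectorUnitary
  let e : {i // ev i ≠ 0} ≃ Fin Z.rank :=
    Fintype.equivFinOfCardEq hZ.1.rank_eq_card_non_zero_eigs.symm
  refine ⟨of fun p k => U p (e.symm k) * (√(ev (e.symm k)) : ℝ), ?_⟩
  have hspec : Z = U * diagonal (fun i => (ev i : 𝕜)) * Uᴴ := hZ.1.spectral_theorem
  have hsqrt : ∀ i, ((√(ev i) : ℝ) : 𝕜) * (√(ev i) : ℝ) = ev i := fun i => by
    rw [← RCLike.ofReal_mul, Real.mul_self_sqrt (hZ.eigenvalues_nonneg i)]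
  ext p q
  calc Z p q = ∑ i, U p i * ev i * star (U q i) := by
        conv_lhs => rw [hspec, mul_apply]
        simp only [mul_diagonal, conjTranspose_apply]
    _ = ∑ k, U p (e.symm k) * ev (e.symm k) * star (U q (e.symm k)) := by
        refine (Fintype.sum_of_injective (fun k => (e.symm k : N))
          (Subtype.val_injective.comp e.symm.injective) _ _ (fun i hi => ?_) fun _ => rfl).symm
        have hev : ev i = 0 := by
          by_contra h
          exact hi ⟨e ⟨i, h⟩, by simp⟩
        simp [hev]
    _ = _ := by
        simp only [mul_apply, conjTranspose_apply, of_apply, star_mul', ← hsqrt, RCLike.star_def,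
          RCLike.conj_ofReal]
        exact Finset.sum_congr rfl fun k _ => by ring

end RankFactorization

section Spectrahedron

open scoped MatrixOrder Matrix.Norms.L2Operator

variable {N E : Type*} [AddCommGroup E] [Module ℂ E]

theorem eq_zero_of_mul_conjTranspose_mem_extremePoints [Finite N] {r : Type*} [Fintype r]
    {f : Matrix N N ℂ →ₗ[ℂ] E} {b : E} {V : Matrix N r ℂ}
    (hV : V * Vᴴ ∈ Set.extremePoints ℝ {Z | Z.PosSemidef ∧ f Z = b}) {H : Matrix r r ℂ}
    (hH : H.IsHermitian) (hfH : f (V * H * Vᴴ) = 0) : V * H * Vᴴ = 0 := by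
  classical
  obtain ⟨ε, hε, hplus, hminus⟩ := exists_pos_nonneg_one_add_sub_smul hH.isSelfAdjoint
  rw [nonneg_iff_posSemidef] at hplus hminus
  have hadd : V * (1 + ε • H) * Vᴴ = V * Vᴴ + ε • (V * H * Vᴴ) := by
    simp [Matrix.mul_add, Matrix.add_mul]
  have hsub : V * (1 - ε • H) * Vᴴ = V * Vᴴ - ε • (V * H * Vᴴ) := by
    simp [Matrix.mul_sub, Matrix.sub_mul]
  have hfε : f (ε • (V * H * Vᴴ)) = 0 := by
    rw [← Complex.coe_smul, map_smul, hfH, smul_zero]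
  have hmem_add : V * Vᴴ + ε • (V * H * Vᴴ) ∈ {Z | Z.PosSemidef ∧ f Z = b} :=
    ⟨hadd ▸ hplus.mul_mul_conjTranspose_same V, by rw [map_add, hfε, add_zero, hV.1.2]⟩
  have hmem_sub : V * Vᴴ - ε • (V * H * Vᴴ) ∈ {Z | Z.PosSemidef ∧ f Z = b} :=
    ⟨hsub ▸ hminus.mul_mul_conjTranspose_same V, by rw [map_sub, hfε, sub_zero, hV.1.2]⟩
  have hmid : V * Vᴴ ∈
      openSegment ℝ (V * Vᴴ + ε • (V * H * Vᴴ)) (V * Vᴴ - ε • (V * H * Vᴴ)) :=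
    ⟨1 / 2, 1 / 2, by norm_num, by norm_num, by norm_num, by module⟩
  have hzero : ε • (V * H * Vᴴ) = 0 := add_eq_left.mp (hV.2 hmem_add hmem_sub hmid)
  exact (smul_eq_zero.mp hzero).resolve_left hε.ne'

theorem rank_sq_le_finrank_of_mem_extremePoints [Fintype N] [FiniteDimensional ℂ E]
    {f : Matrix N N ℂ →ₗ[ℂ] E} (hf : ∀ Z, f Z = 0 → f Zᴴ = 0) {b : E} {Z : Matrix N N ℂ}
    (hZ : Z ∈ Set.extremePoints ℝ {Z | Z.PosSemidef ∧ f Z = b}) :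
    Z.rank ^ 2 ≤ Module.finrank ℂ E := by
  obtain ⟨V, hV⟩ := exists_eq_mul_conjTranspose_of_posSemidef hZ.1.1
  obtain ⟨W, hW⟩ : ∃ W : Matrix (Fin Z.rank) N ℂ, W * V = 1 :=
    exists_left_inverse_of_rank_eq_card <| by
      rw [Fintype.card_fin, ← rank_self_mul_conjTranspose V, ← hV]
  let g : Matrix (Fin Z.rank) (Fin Z.rank) ℂ →ₗ[ℂ] E :=
    f ∘ₗ mulRightLinearMap N ℂ Vᴴ ∘ₗ mulLeftLinearMap (Fin Z.rank) ℂ V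
  have hg : ∀ H, g H = f (V * H * Vᴴ) := fun _ => rfl
  have hstar : ∀ H ∈ LinearMap.ker g, star H ∈ LinearMap.ker g := fun H hH => by
    rw [LinearMap.mem_ker, hg] at hH ⊢
    simpa [star_eq_conjTranspose, conjTranspose_mul, Matrix.mul_assoc] using hf _ hH
  by_contra! hlt
  have hker : LinearMap.ker g ≠ ⊥ :=
    LinearMap.ker_ne_bot_of_finrank_lt (by simpa [Module.finrank_matrix, ← sq] using hlt)
  obtain ⟨H, hHg, hH, hH0⟩ := exists_isSelfAdjoint_mem_ne_zero hstar hker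
  have hVH : V * H * Vᴴ = 0 :=
    eq_zero_of_mul_conjTranspose_mem_extremePoints (hV ▸ hZ) hH hHg
  apply hH0
  calc H = (W * V) * H * (W * V)ᴴ := by simp [hW]
    _ = W * (V * H * Vᴴ) * Wᴴ := by simp only [conjTranspose_mul, Matrix.mul_assoc]
    _ = 0 := by rw [hVH, Matrix.mul_zero, Matrix.zero_mul]

end Spectrahedron

section PartialTrace

variable {R m n : Type*} [Fintype n]

/-- The partial trace over the second tensor factor, `(id ⊗ tr) Z`. For a Choi matrix `Z` the second
factor is the output space, so this records the traces of the images of the matrix units. -/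
def partialTrace [Semiring R] : Matrix (m × n) (m × n) R →ₗ[R] Matrix m m R where
  toFun Z := of fun i j => ∑ p, Z (i, p) (j, p)
  map_add' Y Z := by ext; simp [Finset.sum_add_distrib]
  map_smul' c Z := by ext; simp [Finset.mul_sum]

theorem partialTrace_conjTranspose [Semiring R] [StarRing R] (Z : Matrix (m × n) (m × n) R) :
    partialTrace Zᴴ = (partialTrace Z)ᴴ := by
  ext i j
  simp [partialTrace]

theorem partialTrace_vecMulVec_vec [CommSemiring R] [StarRing R] (A : Matrix n m R) :
    partialTrace (vecMulVec (vec A) (star (vec A))) = (Aᴴ * A)ᵀ := by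
  ext i j
  simp [partialTrace, vecMulVec_apply, vec, mul_apply, mul_comm]

end PartialTrace

/-- The completely positive map `X ↦ ∑ i, A i * X * (A i)ᴴ` with Kraus operators `A i`. -/
def krausMap {R ι m n : Type*} [CommSemiring R] [Star R] [Fintype ι] [Fintype m]
    (A : ι → Matrix n m R) : Matrix m m R →ₗ[R] Matrix n n R where
  toFun X := ∑ i, A i * X * (A i)ᴴ
  map_add' X Y := by simp [Matrix.mul_add, Matrix.add_mul, Finset.sum_add_distrib]
  map_smul' c X := by simp [Finset.smul_sum]

section Choi

variable {m n : ℕ} {L : Matrix (Fin m) (Fin m) ℂ →ₗ[ℂ] Matrix (Fin n) (Fin n) ℂ}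

theorem choi_injective : Function.Injective (choi m n) := fun _ _ h =>
  ext_linearMap ℂ fun i j => LinearMap.ext_ring <| Matrix.ext fun p q =>
    congrFun₂ h (i, p) (j, q)

theorem choi_krausMap {ι : Type*} [Fintype ι] (A : ι → Matrix (Fin n) (Fin m) ℂ) :
    choi m n (krausMap A) = ∑ l, vecMulVec (vec (A l)) (star (vec (A l))) := by
  ext ⟨i, p⟩ ⟨j, q⟩
  simp [choi, krausMap, Matrix.sum_apply, mul_apply, single_apply, ite_and, vecMulVec_apply, vec]

theorem partialTrace_choi_krausMap {ι : Type*} [Fintype ι] (A : ι → Matrix (Fin n) (Fin m) ℂ) :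
    partialTrace (choi m n (krausMap A)) = (∑ l, (A l)ᴴ * A l)ᵀ := by
  simp only [choi_krausMap, map_sum, partialTrace_vecMulVec_vec, transpose_sum]

theorem exists_choi_krausMap_eq {Z : Matrix (Fin m × Fin n) (Fin m × Fin n) ℂ}
    (hZ : Z.PosSemidef) :
    ∃ (k : ℕ) (A : Fin k → Matrix (Fin n) (Fin m) ℂ), choi m n (krausMap A) = Z := by
  obtain ⟨k, v, rfl⟩ := posSemidef_iff_eq_sum_vecMulVec.mp hZ
  choose A hA using fun l => vec_bijective.surjective (v l)
  exact ⟨k, A, by simp only [choi_krausMap, hA]⟩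

theorem isChannel_iff_exists_krausMap :
    IsChannel m n L ↔ ∃ (k : ℕ) (A : Fin k → Matrix (Fin n) (Fin m) ℂ),
      L = krausMap A ∧ ∑ l, (A l)ᴴ * A l = 1 := by
  simp only [IsChannel, LinearMap.ext_iff]
  rfl

theorem isChannel_iff_choi :
    IsChannel m n L ↔ (choi m n L).PosSemidef ∧ partialTrace (choi m n L) = 1 := by
  rw [isChannel_iff_exists_krausMap]
  constructor
  · rintro ⟨k, A, rfl, hA⟩
    refine ⟨?_, by rw [partialTrace_choi_krausMap, hA, transpose_one]⟩
    exact posSemidef_iff_eq_sum_vecMulVec.mpr ⟨k, _, choi_krausMap A⟩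
  · rintro ⟨hpos, htr⟩
    obtain ⟨k, A, hA⟩ := exists_choi_krausMap_eq hpos
    refine ⟨k, A, choi_injective hA.symm, ?_⟩
    rwa [← hA, partialTrace_choi_krausMap, transpose_eq_one] at htr

theorem IsExtremeChannel.choi_mem_extremePoints (hL : IsExtremeChannel m n L) :
    choi m n L ∈ Set.extremePoints ℝ {Z | Z.PosSemidef ∧ partialTrace Z = 1} := by
  refine ⟨isChannel_iff_choi.mp hL.1, ?_⟩
  rintro Z₁ hZ₁ Z₂ hZ₂ ⟨a, b, ha, hb, hab, hZ⟩
  obtain ⟨_, A₁, rfl⟩ := exists_choi_krausMap_eq hZ₁.1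
  obtain ⟨_, A₂, rfl⟩ := exists_choi_krausMap_eq hZ₂.1
  obtain rfl : b = 1 - a := by linarith
  have hlin : choi m n ((a : ℂ) • krausMap A₁ + ((1 - a : ℝ) : ℂ) • krausMap A₂) =
      a • choi m n (krausMap A₁) + (1 - a) • choi m n (krausMap A₂) := rfl
  have hcomb : L = (a : ℂ) • krausMap A₁ + ((1 - a : ℝ) : ℂ) • krausMap A₂ :=
    choi_injective (hlin.trans hZ).symm
  rw [(hL.2 _ _ (isChannel_iff_choi.mpr hZ₁) (isChannel_iff_choi.mpr hZ₂) a ha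
    (by linarith) hcomb).1]

end Choi

/-- an extreme point of the set of quantum channels has Choi rank at most `m`. -/
theorem stmt5 (m n : ℕ) (L : Matrix (Fin m) (Fin m) ℂ →ₗ[ℂ] Matrix (Fin n) (Fin n) ℂ)
    (hL : IsExtremeChannel m n L) : (choi m n L).rank ≤ m := by
  have hrank : (choi m n L).rank ^ 2 ≤ Module.finrank ℂ (Matrix (Fin m) (Fin m) ℂ) :=
    rank_sq_le_finrank_of_mem_extremePoints
      (fun Z hZ => by rw [partialTrace_conjTranspose, hZ, conjTranspose_zero])
      hL.choi_mem_extremePoints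
  refine (Nat.pow_le_pow_iff_left two_ne_zero).mp ?_
  simpa [Module.finrank_matrix, ← sq] using hrank
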